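/- Let q² be a primitive N-th root of unity with N even. Every irreducible finite-dimensional representation of the Chekhov-Fock algebra 𝒯_λ^q of an ideal triangulation of a genus g surface with p punctures has dimension N^{3g+p-3}/2^g. -/

import Mathlib

/-- A combinatorial model (oriented combinatorial map) of an ideal triangulation of a closed
orientable surface of genus `g` with `p` punctures, having `n` edges.  The darts `D` are the
corners (spikes) of the triangles; `φ` is the rotation moving counterclockwise to the next
corner of the same triangle (faces are triangles), `α` is the fixed-point-free involution
pairing the two sides of each edge, `edge` labels each dart by the edge of the triangulation
on its left, and `vert` records the puncture towards which the spike converges (orbits of the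
vertex rotation `φ ∘ α`).  Connectivity and the Euler relation `p - n + F = 2 - 2g` make this
the triangulation of the genus `g` surface with `p` punctures. -/
structure IdealTriangulation (g p n : ℕ) where
  D : Type
  [fintypeD : Fintype D]
  [decEqD : DecidableEq D]
  α : Equiv.Perm D
  φ : Equiv.Perm D
  α_invol : ∀ d, α (α d) = d
  α_fpf : ∀ d, α d ≠ d
  φ_triangles : ∀ d, φ (φ (φ d)) = d
  φ_fpf : ∀ d, φ d ≠ d
  edge : D → Fin n
  edge_surj : Function.Surjective edge
  edge_fiber : ∀ d d', edge d = edge d' ↔ (d' = d ∨ d' = α d)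
  vert : D → Fin p
  vert_surj : Function.Surjective vert
  vert_rot : ∀ d, vert (φ (α d)) = vert d
  vert_orbit : ∀ d d', vert d = vert d' → ∃ k : ℕ, ((α.trans φ) ^ k) d = d'
  connected : ∀ d d', ∃ w ∈ Subgroup.closure ({α, φ} : Set (Equiv.Perm D)), w d = d'
  card_darts : Fintype.card D = 2 * n
  euler : (p : ℤ) - (n : ℤ) + (Fintype.card D : ℤ) / 3 = 2 - 2 * (g : ℤ)

attribute [instance] IdealTriangulation.fintypeD IdealTriangulation.decEqD

/-- The number `a_ij` of spikes delimited on the left by edge `i` and on the right by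
edge `j`. -/
noncomputable def IdealTriangulation.spikeCount {g p n : ℕ} (T : IdealTriangulation g p n)
    (i j : Fin n) : ℕ :=
  (Finset.univ.filter (fun d => T.edge d = i ∧ T.edge (T.φ d) = j)).card

/-- The Weil–Petersson matrix `σ_ij = a_ij - a_ji` of an ideal triangulation. -/
noncomputable def IdealTriangulation.wpMatrix {g p n : ℕ} (T : IdealTriangulation g p n) :
    Matrix (Fin n) (Fin n) ℤ :=
  Matrix.of fun i j => (T.spikeCount i j : ℤ) - (T.spikeCount j i : ℤ)


/-- The bilinear Weil–Petersson form `σ(α, β) = Σ_{i,j} α_i σ_ij β_j` on `ℤⁿ`. -/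
noncomputable def IdealTriangulation.wpForm {g p n : ℕ} (T : IdealTriangulation g p n)
    (x y : Fin n → ℤ) : ℤ :=
  ∑ i : Fin n, ∑ j : Fin n, x i * T.wpMatrix i j * y j

/-- `k_{ij} ∈ {0,1,2}` is the number of ends of the edge `λ_j` converging to the `i`-th
puncture. -/
noncomputable def IdealTriangulation.endCount {g p n : ℕ} (T : IdealTriangulation g p n)
    (i : Fin p) (j : Fin n) : ℕ :=
  (Finset.univ.filter (fun d => T.vert d = i ∧ T.edge d = j)).card

/-- The family of `p` vectors generating the kernel of the Weil–Petersson form: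
the vectors `(k_{i1}, …, k_{in})` for `i = 1, …, p-1` together with `(1, 1, …, 1)`. -/
noncomputable def IdealTriangulation.kerGens {g p n : ℕ} (T : IdealTriangulation g p n)
    (i : Fin p) : Fin n → ℤ :=
  if i.val + 1 < p then (fun j => (T.endCount i j : ℤ)) else (fun _ => 1)

open FreeAlgebra in
/-- The defining relations of the quantum torus (Chekhov–Fock algebra): generators
`X_i` (`Sum.inl i`) and their inverses `X_i⁻¹` (`Sum.inr i`), subject to
`X_i X_j = q^(2 σ_ij) X_j X_i` and `X_i X_i⁻¹ = X_i⁻¹ X_i = 1`. -/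
inductive QTRel (n : ℕ) (q : ℂ) (σ : Fin n → Fin n → ℤ) :
    FreeAlgebra ℂ (Fin n ⊕ Fin n) → FreeAlgebra ℂ (Fin n ⊕ Fin n) → Prop
  | comm (i j : Fin n) : QTRel n q σ (ι ℂ (Sum.inl i) * ι ℂ (Sum.inl j))
      ((q ^ (2 * σ i j) : ℂ) • (ι ℂ (Sum.inl j) * ι ℂ (Sum.inl i)))
  | mul_inv (i : Fin n) : QTRel n q σ (ι ℂ (Sum.inl i) * ι ℂ (Sum.inr i)) 1
  | inv_mul (i : Fin n) : QTRel n q σ (ι ℂ (Sum.inr i) * ι ℂ (Sum.inl i)) 1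

/-- The quantum torus `𝒯` with parameters `q` and `σ`: the `ℂ`-algebra generated by
`X_1^{±1}, …, X_n^{±1}` with relations `X_i X_j = q^(2 σ_ij) X_j X_i`. -/
abbrev QuantumTorus (n : ℕ) (q : ℂ) (σ : Fin n → Fin n → ℤ) :=
  RingQuot (QTRel n q σ)

/-- The generator `X_i` of the quantum torus. -/
noncomputable def QuantumTorus.X {n : ℕ} {q : ℂ} {σ : Fin n → Fin n → ℤ} (i : Fin n) :
    QuantumTorus n q σ :=
  RingQuot.mkAlgHom ℂ (QTRel n q σ) (FreeAlgebra.ι ℂ (Sum.inl i))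

/-- The generator `X_i⁻¹` of the quantum torus. -/
noncomputable def QuantumTorus.Xinv {n : ℕ} {q : ℂ} {σ : Fin n → Fin n → ℤ} (i : Fin n) :
    QuantumTorus n q σ :=
  RingQuot.mkAlgHom ℂ (QTRel n q σ) (FreeAlgebra.ι ℂ (Sum.inr i))

/-- `X_i^k` for an integer exponent `k ∈ ℤ`. -/
noncomputable def QuantumTorus.Xzpow {n : ℕ} {q : ℂ} {σ : Fin n → Fin n → ℤ} (i : Fin n)
    (k : ℤ) : QuantumTorus n q σ :=
  if 0 ≤ k then (QuantumTorus.X i) ^ k.toNat else (QuantumTorus.Xinv i) ^ (-k).toNat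

/-- The monomial `X_1^{k_1} X_2^{k_2} ⋯ X_n^{k_n}` of the quantum torus. -/
noncomputable def QuantumTorus.monomial {n : ℕ} {q : ℂ} {σ : Fin n → Fin n → ℤ}
    (k : Fin n → ℤ) : QuantumTorus n q σ :=
  ((List.finRange n).map (fun i => QuantumTorus.Xzpow i (k i))).prod

/-- The Chekhov–Fock algebra `𝒯_λ^q` of an ideal triangulation `λ`: the quantum torus with
skew-commutation exponents given by the Weil–Petersson matrix `σ` of `λ`. -/
noncomputable abbrev ChekhovFock {g p n : ℕ} (T : IdealTriangulation g p n) (q : ℂ) :=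
  QuantumTorus n q (fun i j => T.wpMatrix i j)

/-- A representation `ρ : A → End(V)` is irreducible if `V ≠ 0` and the only invariant
subspaces are `0` and `V`. -/
def IsIrreducibleRep {A V : Type*} [Ring A] [Algebra ℂ A] [AddCommGroup V] [Module ℂ V]
    (ρ : A →ₐ[ℂ] Module.End ℂ V) : Prop :=
  (∃ v : V, v ≠ 0) ∧
    ∀ W : Submodule ℂ V, (∀ (a : A), ∀ w ∈ W, ρ a w ∈ W) → W = ⊥ ∨ W = ⊤

/-!
By Burnside's theorem `ρ` is onto `Module.End ℂ V`, so this matrix algebra is spanned by the words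
in the `X i` and their inverses. Commuting `X i` past a word multiplies it by a power of `q ^ 2`.
Words with the same exponents modulo `N` are proportional, because a word commuting with all `X i`
is a scalar, and words with distinct exponents are linearly independent. As the exponents form the
image of the Weil–Petersson matrix `σ` over `ZMod N`, this image has `(dim V) ^ 2` elements.

The kernel of `σ` is counted over any finite commutative ring `R`. Attach to a vector `x`, indexed
by the edges, its corner sum at each spike: the two adjacent sides minus the opposite one. Then
`σ x = 0` exactly when the corner sums agree around each puncture. A function of the punctures
occurs in this way exactly when its values are congruent modulo `2`, and the `x` with vanishing
corner sums are the vectors of `2`-torsion elements whose sum over each triangle is zero. By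
connectedness the triangle sums are subject to the single relation that their total vanishes, so
the Euler relation gives `|ker σ| = |R| ^ p * |R[2]| ^ (2 * g)`.
-/

/-! ### Irreducible representations and skew-commuting units -/

section Burnside

variable {k A V : Type*} [Field k] [IsAlgClosed k] [Ring A] [Algebra k A] [AddCommGroup V]
  [Module k V] [FiniteDimensional k V]

theorem lsmul_surjective_of_isSimpleModule [Module A V] [IsScalarTower k A V] [IsSimpleModule A V] :
    Function.Surjective (Algebra.lsmul k k V : A →ₐ[k] Module.End k V) := by
  intro f
  have schur := (IsSimpleModule.algebraMap_end_bijective_of_isAlgClosed (A := A) (V := V) k).2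
  let f' : Module.End (Module.End A V) V :=
    { f with
      map_smul' := fun g v => by
        obtain ⟨c, rfl⟩ := schur g
        exact map_smul f c v }
  obtain ⟨s, hs⟩ := Module.Finite.fg_top (R := k) (M := V)
  obtain ⟨a, ha⟩ := jacobson_density f' s
  exact ⟨a, LinearMap.ext_on hs fun v hv => (ha v hv).symm⟩

end Burnside

theorem IsIrreducibleRep.surjective {A V : Type*} [Ring A] [Algebra ℂ A] [AddCommGroup V]
    [Module ℂ V] [FiniteDimensional ℂ V] {ρ : A →ₐ[ℂ] Module.End ℂ V} (hρ : IsIrreducibleRep ρ) :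
    Function.Surjective ρ := by
  let _ : Module A V := Module.compHom V ρ.toRingHom
  have : IsScalarTower ℂ A V :=
    ⟨fun c a v => by change ρ (c • a) v = c • ρ a v; rw [map_smul, LinearMap.smul_apply]⟩
  obtain ⟨⟨v, hv⟩, hirr⟩ := hρ
  have : Nontrivial V := ⟨v, 0, hv⟩
  have : IsSimpleModule A V :=
    isSimpleModule_iff .. |>.2
      { eq_bot_or_eq_top := fun W => (hirr (W.restrictScalars ℂ) fun a w hw => W.smul_mem a hw).imp
          (Submodule.restrictScalars_eq_bot_iff ..).1 (Submodule.restrictScalars_eq_top_iff ..).1 }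
  intro f
  obtain ⟨a, ha⟩ := lsmul_surjective_of_isSimpleModule (k := ℂ) (A := A) f
  exact ⟨a, ha⟩

theorem linearIndependent_of_joint_eigenvectors {ι κ k M : Type*} [Field k] [AddCommGroup M]
    [Module k M] {f : ι → Module.End k M} {μ : κ → ι → k} (hμ : Function.Injective μ) {v : κ → M}
    (hv : ∀ a, v a ≠ 0) (hf : ∀ i a, f i (v a) = μ a i • v a) : LinearIndependent k v := by
  classical
  rw [linearIndependent_iff']
  intro s
  induction s using Finset.induction_on with
  | empty => simp
  | insert a s ha ih =>
    intro c hc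
    have hs : ∀ b ∈ s, c b = 0 := by
      intro b hb
      obtain ⟨i, hi⟩ := Function.ne_iff.1 (hμ.ne (ne_of_mem_of_not_mem hb ha))
      have killed : ∑ d ∈ s, (c d * (μ d i - μ a i)) • v d = 0 := calc
        _ = ∑ d ∈ insert a s, (c d * (μ d i - μ a i)) • v d := by
          rw [Finset.sum_insert ha, sub_self, mul_zero, zero_smul, zero_add]
        _ = f i (∑ d ∈ insert a s, c d • v d) - μ a i • ∑ d ∈ insert a s, c d • v d := by
          simp only [map_sum, map_smul, hf, Finset.smul_sum, ← Finset.sum_sub_distrib, smul_smul,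
            ← sub_smul, mul_sub, mul_comm (μ a i)]
        _ = 0 := by rw [hc, map_zero, smul_zero, sub_zero]
      exact (mul_eq_zero.1 (ih _ killed b hb)).resolve_right (sub_ne_zero.2 hi)
    have hca : c a • v a = 0 := by
      rwa [Finset.sum_insert ha, Finset.sum_eq_zero fun b hb => by rw [hs b hb, zero_smul],
        add_zero] at hc
    exact Finset.forall_mem_insert .. |>.2 ⟨(smul_eq_zero.1 hca).resolve_right (hv a), hs⟩

section SkewCommuting

variable {ι k A E : Type*} [Field k] [AddCommGroup A] [Ring E] [Algebra k E]
  {e : AddChar A k} {u : ι → Eˣ} {s : ι → ι → A}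

/-- The weight `a : ι → A` of a word `g` in units `u i` with
`u i * u j = e (s i j) • (u j * u i)`, where `e` is an additive character of `A`; it records the
skew-commutation of the word with the generators: `u i * g = e (a i) • (g * u i)`. -/
def wordWeight (s : ι → ι → A) : FreeGroup ι →* Multiplicative (ι → A) :=
  FreeGroup.lift fun j => .ofAdd fun i => s i j

theorem range_wordWeight (s : ι → ι → A) : (wordWeight s).range =
    (AddSubgroup.closure (Set.range fun j i => s i j)).toSubgroup := by
  rw [wordWeight, FreeGroup.range_lift_eq_closure, AddSubgroup.toSubgroup_closure]
  rfl

theorem mul_lift_eq_smul_lift_mul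
    (hu : ∀ i j, (u i : E) * u j = e (s i j) • ((u j : E) * u i)) (g : FreeGroup ι) (i : ι) :
    (u i : E) * FreeGroup.lift u g =
      e ((wordWeight s g).toAdd i) • ((FreeGroup.lift u g : E) * u i) := by
  induction g using FreeGroup.induction_on with
  | C1 => simp
  | of j => simpa [wordWeight] using hu i j
  | inv_of j h =>
    simp only [map_inv, toAdd_inv, Pi.neg_apply]
    have conj := congrArg (fun x : E => ↑(FreeGroup.lift u (.of j))⁻¹ * x *
      ↑(FreeGroup.lift u (.of j))⁻¹) h
    have h' : (↑(FreeGroup.lift u (.of j))⁻¹ : E) * u i =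
        e ((wordWeight s (.of j)).toAdd i) • ((u i : E) * ↑(FreeGroup.lift u (.of j))⁻¹) := by
      simpa only [mul_assoc, mul_smul_comm, smul_mul_assoc, Units.mul_inv, mul_one,
        Units.inv_mul_cancel_left] using conj
    rw [h', smul_smul, ← AddChar.map_add_eq_mul, neg_add_cancel, AddChar.map_zero_eq_one, one_smul]
  | mul g h hg hh =>
    rw [map_mul, map_mul, Units.val_mul, ← mul_assoc, hg, smul_mul_assoc, mul_assoc, hh, toAdd_mul,
      Pi.add_apply, AddChar.map_add_eq_mul, mul_smul_comm, smul_smul, mul_assoc]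

theorem exists_eq_algebraMap_of_commute [Algebra.IsCentral k E]
    (hadj : Algebra.adjoin k
      (Set.range (fun i => (u i : E)) ∪ Set.range fun i => (↑(u i)⁻¹ : E)) = ⊤)
    {x : E} (hx : ∀ i, Commute (u i : E) x) : ∃ c : k, x = algebraMap k E c := by
  have hle : Algebra.adjoin k (Set.range (fun i => (u i : E)) ∪ Set.range fun i => (↑(u i)⁻¹ : E)) ≤
      Subalgebra.centralizer k {x} := by
    refine Algebra.adjoin_le (Set.union_subset ?_ ?_) <;> rintro _ ⟨i, rfl⟩ <;>
      rw [SetLike.mem_coe, Subalgebra.mem_centralizer_iff] <;> rintro _ rfl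
    exacts [(hx i).symm, (hx i).units_inv_left.symm]
  have hcenter : x ∈ Subalgebra.center k E := Subalgebra.mem_center_iff.2 fun y =>
    ((Subalgebra.mem_centralizer_iff k).1 (hle (hadj ▸ Algebra.mem_top : y ∈ _)) x rfl).symm
  obtain ⟨c, hc⟩ := Algebra.mem_bot.1 (Algebra.IsCentral.out hcenter)
  exact ⟨c, hc.symm⟩

theorem span_range_lift_eq_top
    (hadj : Algebra.adjoin k
      (Set.range (fun i => (u i : E)) ∪ Set.range fun i => (↑(u i)⁻¹ : E)) = ⊤) :
    Submodule.span k (Set.range fun g => (FreeGroup.lift u g : E)) = ⊤ := by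
  rw [eq_top_iff, ← Algebra.top_toSubmodule, ← hadj, Algebra.adjoin_eq_span]
  refine Submodule.span_mono ?_
  change Submonoid.closure _ ≤ MonoidHom.mrange ((Units.coeHom E).comp (FreeGroup.lift u))
  refine Submonoid.closure_le.2 (Set.union_subset ?_ ?_) <;> rintro _ ⟨i, rfl⟩
  exacts [⟨.of i, by simp⟩, ⟨(.of i)⁻¹, by simp⟩]

/-- Each weight space is a line: two words of equal weight differ by an element commuting with
all generators, that is, by a scalar. -/
theorem lift_mem_span_of_wordWeight_eq [Algebra.IsCentral k E]
    (hadj : Algebra.adjoin k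
      (Set.range (fun i => (u i : E)) ∪ Set.range fun i => (↑(u i)⁻¹ : E)) = ⊤)
    (hu : ∀ i j, (u i : E) * u j = e (s i j) • ((u j : E) * u i)) {g h : FreeGroup ι}
    (hgh : wordWeight s g = wordWeight s h) :
    (FreeGroup.lift u g : E) ∈ Submodule.span k {(FreeGroup.lift u h : E)} := by
  have hweight : wordWeight s (h⁻¹ * g) = 1 := by rw [map_mul, map_inv, hgh, inv_mul_cancel]
  obtain ⟨c, hc⟩ := exists_eq_algebraMap_of_commute hadj
    (x := FreeGroup.lift u (h⁻¹ * g)) fun i => by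
      simpa [hweight, commute_iff_eq] using mul_lift_eq_smul_lift_mul hu (h⁻¹ * g) i
  refine Submodule.mem_span_singleton.2 ⟨c, ?_⟩
  rw [Algebra.smul_def, Algebra.commutes, ← hc, ← Units.val_mul, ← map_mul, mul_inv_cancel_left]

theorem finrank_eq_card_closure_of_skewCommuting [Nontrivial E] [Algebra.IsCentral k E]
    (he : Function.Injective e)
    (hadj : Algebra.adjoin k
      (Set.range (fun i => (u i : E)) ∪ Set.range fun i => (↑(u i)⁻¹ : E)) = ⊤)
    (hu : ∀ i j, (u i : E) * u j = e (s i j) • ((u j : E) * u i)) :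
    Module.finrank k E = Nat.card (AddSubgroup.closure (Set.range fun j i => s i j)) := by
  choose word hword using fun a : (wordWeight s).range => a.2
  let b (a : (wordWeight s).range) : E := FreeGroup.lift u (word a)
  have hli : LinearIndependent k b := by
    refine linearIndependent_of_joint_eigenvectors
      (f := fun i => LinearMap.mulLeftRight k ((u i : E), (↑(u i)⁻¹ : E)))
      (μ := fun a i => e (a.1.toAdd i)) (fun a a' h => ?_) (fun a => Units.ne_zero _)
      (fun i a => ?_)
    · exact Subtype.ext (Multiplicative.toAdd.injective (funext fun i => he (congrFun h i)))
    · rw [LinearMap.mulLeftRight_apply, mul_lift_eq_smul_lift_mul hu, hword, smul_mul_assoc,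
        Units.mul_inv_cancel_right]
  have hspan : ⊤ ≤ Submodule.span k (Set.range b) := by
    rw [← span_range_lift_eq_top hadj, Submodule.span_le]
    rintro _ ⟨g, rfl⟩
    have hg := lift_mem_span_of_wordWeight_eq hadj hu (hword ⟨wordWeight s g, g, rfl⟩).symm
    exact Submodule.span_mono (Set.singleton_subset_iff.2 (Set.mem_range_self _)) hg
  rw [Module.finrank_eq_nat_card_basis (.mk hli hspan), range_wordWeight]
  rfl

end SkewCommuting

section ZMod

variable {N : ℕ}

theorem toAddSubgroup_span_zmod {M : Type*} [AddCommGroup M] [Module (ZMod N) M] (S : Set M) :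
    (Submodule.span (ZMod N) S).toAddSubgroup = AddSubgroup.closure S :=
  le_antisymm
    (Submodule.span_le (p := AddSubgroup.toZModSubmodule N (.closure S)).2
      AddSubgroup.subset_closure)
    ((AddSubgroup.closure_le _).2 Submodule.subset_span)

variable [NeZero N] {K : Type*} [Field K] {ζ : K}

theorem zmodChar_intCast (hζ : IsPrimitiveRoot ζ N) (a : ℤ) :
    AddChar.zmodChar N hζ.pow_eq_one a = ζ ^ a := by
  have h1 : AddChar.zmodChar N hζ.pow_eq_one 1 = ζ := by
    simpa using AddChar.zmodChar_apply' hζ.pow_eq_one 1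
  rw [← zsmul_one, AddChar.map_zsmul_eq_zpow, h1]

theorem zmodChar_injective (hζ : IsPrimitiveRoot ζ N) :
    Function.Injective (AddChar.zmodChar N hζ.pow_eq_one) := fun a b h =>
  ZMod.val_injective N (hζ.pow_inj (ZMod.val_lt a) (ZMod.val_lt b) h)

end ZMod

namespace QuantumTorus

variable {n : ℕ} {q : ℂ} {σ : Fin n → Fin n → ℤ}

/-- The generator `X_i` as a unit of the quantum torus, with inverse `X_i⁻¹`. -/
noncomputable def unitX (i : Fin n) : (QuantumTorus n q σ)ˣ where
  val := X i
  inv := Xinv i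
  val_inv := by
    have := RingQuot.mkAlgHom_rel ℂ (QTRel.mul_inv (q := q) (σ := σ) i)
    rwa [map_mul, map_one] at this
  inv_val := by
    have := RingQuot.mkAlgHom_rel ℂ (QTRel.inv_mul (q := q) (σ := σ) i)
    rwa [map_mul, map_one] at this

theorem X_mul_X (i j : Fin n) :
    (X i * X j : QuantumTorus n q σ) = (q ^ (2 * σ i j) : ℂ) • (X j * X i) := by
  have := RingQuot.mkAlgHom_rel ℂ (QTRel.comm (q := q) (σ := σ) i j)
  rwa [map_smul, map_mul, map_mul] at this

theorem adjoin_range_X_union_range_Xinv :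
    Algebra.adjoin ℂ (Set.range X ∪ Set.range Xinv : Set (QuantumTorus n q σ)) = ⊤ := by
  rw [← (AlgHom.range_eq_top _).2 (RingQuot.mkAlgHom_surjective ℂ (QTRel n q σ)),
    ← Algebra.map_top, ← FreeAlgebra.adjoin_range_ι, AlgHom.map_adjoin, ← Set.range_comp,
    Sum.range_eq]
  rfl

theorem finrank_sq_eq_card_range {N : ℕ} [NeZero N] (hq : IsPrimitiveRoot (q ^ 2) N) {V : Type*}
    [AddCommGroup V] [Module ℂ V] [FiniteDimensional ℂ V]
    {ρ : QuantumTorus n q σ →ₐ[ℂ] Module.End ℂ V} (hρ : IsIrreducibleRep ρ) :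
    Module.finrank ℂ V ^ 2 =
      Nat.card ((Matrix.of σ).map (Int.cast : ℤ → ZMod N)).mulVecLin.range := by
  have : Nontrivial V := let ⟨v, hv⟩ := hρ.1; ⟨v, 0, hv⟩
  let u (i : Fin n) : (Module.End ℂ V)ˣ :=
    Units.map (ρ : QuantumTorus n q σ →* Module.End ℂ V) (unitX i)
  have hadj : Algebra.adjoin ℂ (Set.range (fun i => (u i : Module.End ℂ V)) ∪
      Set.range fun i => (↑(u i)⁻¹ : Module.End ℂ V)) = ⊤ := by
    have := congrArg (Subalgebra.map ρ) (adjoin_range_X_union_range_Xinv (q := q) (σ := σ))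
    rwa [AlgHom.map_adjoin, Algebra.map_top, (AlgHom.range_eq_top ρ).2 hρ.surjective,
      Set.image_union, ← Set.range_comp, ← Set.range_comp] at this
  have hu (i j : Fin n) : (u i * u j : Module.End ℂ V) =
      AddChar.zmodChar N hq.pow_eq_one (σ i j) • (u j * u i : Module.End ℂ V) := by
    have := congrArg ρ (X_mul_X (q := q) (σ := σ) i j)
    rwa [map_smul, map_mul, map_mul, zpow_mul, zpow_ofNat, ← zmodChar_intCast hq] at this
  rw [sq, ← Module.finrank_linearMap, finrank_eq_card_closure_of_skewCommuting
    (zmodChar_injective hq) hadj hu, Matrix.range_mulVecLin, ← toAddSubgroup_span_zmod (N := N)]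
  rfl

end QuantumTorus

/-! ### The kernel of the Weil–Petersson matrix -/

/-- The subgroup of functions all of whose values are congruent modulo `B`. -/
def constModSubgroup (ι : Type*) {A : Type*} [AddCommGroup A] (B : AddSubgroup A) :
    AddSubgroup (ι → A) where
  carrier := {k | ∀ v w, k v - k w ∈ B}
  zero_mem' v w := by simp
  add_mem' hk hl v w := by
    simpa only [Pi.add_apply, add_sub_add_comm] using B.add_mem (hk v w) (hl v w)
  neg_mem' hk v w := by simpa only [Pi.neg_apply, neg_sub_neg] using hk w v

/-- Both sides count a base value in `A` together with `B`-valued deviations, the left-hand side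
also counting a shift of the base value by an element of `B`. -/
theorem card_constModSubgroup_mul_card {ι A : Type*} [Fintype ι] [Nonempty ι] [AddCommGroup A]
    (B : AddSubgroup A) :
    Nat.card (constModSubgroup ι B) * Nat.card B = Nat.card A * Nat.card B ^ Fintype.card ι := by
  classical
  obtain ⟨v₀⟩ := ‹Nonempty ι›
  let shift : constModSubgroup ι B × B ≃ A × (ι → B) :=
    { toFun := fun kb => (kb.1.1 v₀ - kb.2, fun v => ⟨kb.1.1 v - kb.1.1 v₀, kb.1.2 v v₀⟩ + kb.2)
      invFun := fun aβ => (⟨fun v => aβ.1 + aβ.2 v, fun v w => by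
        simpa only [add_sub_add_left_eq_sub] using B.sub_mem (aβ.2 v).2 (aβ.2 w).2⟩, aβ.2 v₀)
      left_inv := fun ⟨k, b⟩ => by ext <;> simp
      right_inv := fun ⟨a, β⟩ => by ext <;> simp }
  rw [← Nat.card_prod, Nat.card_congr shift, Nat.card_prod, Nat.card_fun,
    Nat.card_eq_fintype_card (α := ι)]

namespace IdealTriangulation

variable {g p n : ℕ} (T : IdealTriangulation g p n)

theorem eq_of_α_φ_invariant {Q : Type*} {c : T.D → Q} (hα : ∀ d, c (T.α d) = c d)
    (hφ : ∀ d, c (T.φ d) = c d) (d d' : T.D) : c d = c d' := by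
  obtain ⟨w, hw, rfl⟩ := T.connected d d'
  induction hw using Subgroup.closure_induction generalizing d with
  | mem x hx => obtain rfl | rfl := hx; exacts [(hα d).symm, (hφ d).symm]
  | one => rfl
  | mul a b _ _ ha hb => exact (hb d).trans (ha (b d))
  | inv a _ ha => simpa using (ha (a⁻¹ d)).symm

theorem edge_α (d : T.D) : T.edge (T.α d) = T.edge d :=
  ((T.edge_fiber d (T.α d)).2 (.inr rfl)).symm

theorem vert_α (d : T.D) : T.vert (T.α d) = T.vert (T.φ d) := by
  simpa only [T.α_invol] using (T.vert_rot (T.α d)).symm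

theorem exists_comp_edge_eq {Q : Type*} {c : T.D → Q} (hc : ∀ d, c (T.α d) = c d) :
    ∃ x : Fin n → Q, x ∘ T.edge = c := by
  obtain ⟨s, hs⟩ := T.edge_surj.hasRightInverse
  refine ⟨c ∘ s, funext fun d => ?_⟩
  obtain h | h := (T.edge_fiber _ _).1 (hs (T.edge d)).symm
  exacts [congrArg c h, (congrArg c h).trans (hc d)]

theorem exists_comp_vert_eq {Q : Type*} {c : T.D → Q} (hc : ∀ d, c (T.φ (T.α d)) = c d) :
    ∃ k : Fin p → Q, k ∘ T.vert = c := by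
  have hpow (m : ℕ) (d : T.D) : c (((T.α.trans T.φ) ^ m) d) = c d := by
    induction m with
    | zero => rfl
    | succ m ih => rw [pow_succ', Equiv.Perm.mul_apply, ← ih]; exact hc _
  obtain ⟨s, hs⟩ := T.vert_surj.hasRightInverse
  refine ⟨c ∘ s, funext fun d => ?_⟩
  obtain ⟨m, hm⟩ := T.vert_orbit _ _ (hs (T.vert d)).symm
  exact (congrArg c hm).symm.trans (hpow m d)

theorem filter_edge_eq (d : T.D) :
    Finset.univ.filter (fun x => T.edge x = T.edge d) = {d, T.α d} := by
  ext x
  simpa [eq_comm (a := T.edge x)] using T.edge_fiber d x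

section CornerSum

variable {A : Type*} [AddCommGroup A]

/-- The corner sum of `x : Fin n → A` at a spike: `x` is summed over the two edges bounding the
spike, minus the value of `x` on the opposite edge. -/
def cornerSum : (Fin n → A) →+ (T.D → A) where
  toFun x d := x (T.edge (T.φ (T.φ d))) + x (T.edge d) - x (T.edge (T.φ d))
  map_zero' := by ext; simp
  map_add' x y := by ext; simp only [Pi.add_apply]; abel

theorem cornerSum_apply (x : Fin n → A) (d : T.D) :
    T.cornerSum x d = x (T.edge (T.φ (T.φ d))) + x (T.edge d) - x (T.edge (T.φ d)) := rfl

theorem cornerSum_add_cornerSum_φ (x : Fin n → A) (d : T.D) :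
    T.cornerSum x d + T.cornerSum x (T.φ d) = 2 • x (T.edge d) := by
  simp only [cornerSum_apply, T.φ_triangles]; abel

theorem mem_constModSubgroup_of_cornerSum_eq {x : Fin n → A} {k : Fin p → A}
    (hx : T.cornerSum x = k ∘ T.vert) :
    k ∈ constModSubgroup (Fin p) (nsmulAddMonoidHom 2).range := by
  intro v w
  obtain ⟨d, rfl⟩ := T.vert_surj v
  obtain ⟨d', rfl⟩ := T.vert_surj w
  let c (d : T.D) : A ⧸ (nsmulAddMonoidHom 2 : A →+ A).range := k (T.vert d)
  have hφ (d : T.D) : c (T.φ d) = c d := by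
    refine QuotientAddGroup.eq.2 ⟨x (T.edge d) - T.cornerSum x (T.φ d), ?_⟩
    rw [nsmulAddMonoidHom_apply, nsmul_sub, ← cornerSum_add_cornerSum_φ, hx]
    simp only [Function.comp_apply]
    abel
  have hα (d : T.D) : c (T.α d) = c d := by
    rw [← hφ d]
    simp only [c, T.vert_α]
  rw [sub_eq_neg_add]
  exact QuotientAddGroup.eq.1 (T.eq_of_α_φ_invariant hα hφ d' d)

theorem exists_cornerSum_eq_comp_vert {k : Fin p → A}
    (hk : k ∈ constModSubgroup (Fin p) (nsmulAddMonoidHom 2).range) :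
    ∃ x, T.cornerSum x = k ∘ T.vert := by
  obtain hD | ⟨⟨d₀⟩⟩ := isEmpty_or_nonempty T.D
  · exact ⟨0, Subsingleton.elim _ _⟩
  choose b hb using fun v => hk v (T.vert d₀)
  -- On an edge joining the punctures `v` and `w` put `x = k v₀ + b v + b w`.
  obtain ⟨x, hx⟩ := T.exists_comp_edge_eq
    (c := fun d => k (T.vert d₀) + b (T.vert d) + b (T.vert (T.φ d))) fun d => by
      rw [T.vert_rot, T.vert_α]; abel
  simp only [funext_iff, Function.comp_apply] at hx
  refine ⟨x, funext fun d => ?_⟩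
  rw [cornerSum_apply, hx, hx, hx, T.φ_triangles, Function.comp_apply,
    ← sub_add_cancel (k (T.vert d)) (k (T.vert d₀)), ← hb, nsmulAddMonoidHom_apply]
  abel

end CornerSum

section WeilPetersson

variable {R : Type*} [CommRing R]

theorem sum_spikeCount_mul (x : Fin n → R) (j : Fin n) :
    ∑ i, (T.spikeCount j i : R) * x i = ∑ d with T.edge d = j, x (T.edge (T.φ d)) := by
  rw [← Finset.sum_fiberwise' _ (fun d => T.edge (T.φ d))]
  simp [spikeCount, Finset.filter_filter]

theorem sum_spikeCount_mul' (x : Fin n → R) (j : Fin n) :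
    ∑ i, (T.spikeCount i j : R) * x i = ∑ d with T.edge d = j, x (T.edge (T.φ (T.φ d))) := by
  have hrot : ∑ d with T.edge (T.φ d) = j, x (T.edge d) =
      ∑ d with T.edge d = j, x (T.edge (T.φ (T.φ d))) :=
    Finset.sum_equiv T.φ (by simp) fun d _ => by rw [T.φ_triangles]
  rw [← hrot, ← Finset.sum_fiberwise' _ T.edge]
  simp [spikeCount, Finset.filter_filter, and_comm]

theorem wpMatrix_mulVec_edge (x : Fin n → R) (d : T.D) :
    (T.wpMatrix.map (Int.cast : ℤ → R)).mulVec x (T.edge d) =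
      T.cornerSum x (T.φ (T.α d)) - T.cornerSum x d := by
  have hsum : (T.wpMatrix.map (Int.cast : ℤ → R)).mulVec x (T.edge d) =
      ∑ i, (T.spikeCount (T.edge d) i : R) * x i - ∑ i, (T.spikeCount i (T.edge d) : R) * x i := by
    simp [Matrix.mulVec, dotProduct, wpMatrix, sub_mul]
  rw [hsum, sum_spikeCount_mul, sum_spikeCount_mul', ← Finset.sum_sub_distrib, filter_edge_eq,
    Finset.sum_pair (T.α_fpf d).symm, cornerSum_apply, cornerSum_apply, T.φ_triangles, edge_α]
  abel

theorem wpMatrix_mulVec_eq_zero_iff (x : Fin n → R) :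
    (T.wpMatrix.map (Int.cast : ℤ → R)).mulVec x = 0 ↔
      ∃ k : Fin p → R, T.cornerSum x = k ∘ T.vert := by
  simp only [funext_iff, T.edge_surj.forall, wpMatrix_mulVec_edge, Pi.zero_apply, sub_eq_zero]
  constructor
  · intro h
    obtain ⟨k, hk⟩ := T.exists_comp_vert_eq h
    exact ⟨k, fun d => (congrFun hk d).symm⟩
  · rintro ⟨k, hk⟩ d
    rw [hk, hk, Function.comp_apply, Function.comp_apply, T.vert_rot]

theorem map_ker_wpMatrix_cornerSum :
    (T.wpMatrix.map (Int.cast : ℤ → R)).mulVecLin.ker.toAddSubgroup.map T.cornerSum =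
      (constModSubgroup (Fin p) (nsmulAddMonoidHom 2).range).map
        (LinearMap.funLeft R R T.vert).toAddMonoidHom := by
  ext h
  constructor
  · rintro ⟨x, hx, rfl⟩
    obtain ⟨k, hk⟩ := (T.wpMatrix_mulVec_eq_zero_iff x).1 hx
    exact ⟨k, T.mem_constModSubgroup_of_cornerSum_eq hk, hk.symm⟩
  · rintro ⟨k, hk, rfl⟩
    obtain ⟨x, hx⟩ := T.exists_cornerSum_eq_comp_vert hk
    exact ⟨x, (T.wpMatrix_mulVec_eq_zero_iff x).2 ⟨k, hx⟩, hx⟩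

theorem card_ker_wpMatrix_eq_mul :
    Nat.card (T.wpMatrix.map (Int.cast : ℤ → R)).mulVecLin.ker =
      Nat.card (T.cornerSum (A := R)).ker *
        Nat.card (constModSubgroup (Fin p) (nsmulAddMonoidHom 2 : R →+ R).range) := by
  let K := (T.wpMatrix.map (Int.cast : ℤ → R)).mulVecLin.ker.toAddSubgroup
  have hle : T.cornerSum.ker ≤ K := fun x hx =>
    (T.wpMatrix_mulVec_eq_zero_iff x).2 ⟨0, hx⟩
  have hinj : Function.Injective (LinearMap.funLeft R R T.vert).toAddMonoidHom :=
    LinearMap.funLeft_injective_of_surjective R R _ T.vert_surj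
  have := AddSubgroup.relIndex_mul_relIndex ⊥ _ K bot_le hle
  rw [AddSubgroup.relIndex_bot_left, AddSubgroup.relIndex_bot_left, AddSubgroup.relIndex_ker,
    map_ker_wpMatrix_cornerSum, AddSubgroup.card_map_of_injective hinj] at this
  exact this.symm

end WeilPetersson

section Face

/-- The triangles of the triangulation: the orbits of the rotation `φ`. -/
def Face : Type := Quotient (Equiv.Perm.SameCycle.setoid T.φ)

/-- The triangle containing a given spike. -/
def face (d : T.D) : T.Face := Quotient.mk _ d

theorem face_surjective : Function.Surjective T.face := Quotient.mk_surjective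

noncomputable instance : Fintype T.Face :=
  @Fintype.ofFinite _ (Finite.of_surjective _ T.face_surjective)

noncomputable instance : DecidableEq T.Face := Classical.decEq _

theorem face_φ (d : T.D) : T.face (T.φ d) = T.face d :=
  Quotient.sound (Equiv.Perm.sameCycle_apply_left.2 (.refl _ _))

theorem face_eq_iff {d d' : T.D} :
    T.face d = T.face d' ↔ d' = d ∨ d' = T.φ d ∨ d' = T.φ (T.φ d) := by
  constructor
  · intro h
    obtain ⟨i, rfl⟩ : T.φ.SameCycle d d' := Quotient.exact h
    have hφ : T.φ ^ (3 : ℤ) = 1 := Equiv.ext T.φ_triangles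
    rw [← Int.emod_add_mul_ediv i 3, zpow_add, zpow_mul, hφ, one_zpow, mul_one]
    have : i % 3 = 0 ∨ i % 3 = 1 ∨ i % 3 = 2 := by lia
    rcases this with h | h | h <;> rw [h]
    exacts [.inl rfl, .inr (.inl rfl), .inr (.inr rfl)]
  · rintro (rfl | rfl | rfl) <;> simp only [face_φ]

theorem filter_face_eq (d : T.D) :
    Finset.univ.filter (fun x => T.face x = T.face d) = {d, T.φ d, T.φ (T.φ d)} := by
  ext x
  simpa [eq_comm (a := T.face x)] using T.face_eq_iff (d := d) (d' := x)

theorem φ_φ_ne (d : T.D) : T.φ (T.φ d) ≠ d := fun h =>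
  T.φ_fpf d (by simpa only [h] using T.φ_triangles d)

theorem sum_face_eq {M : Type*} [AddCommMonoid M] (f : T.D → M) (d : T.D) :
    ∑ x with T.face x = T.face d, f x = f d + f (T.φ d) + f (T.φ (T.φ d)) := by
  rw [filter_face_eq, Finset.sum_insert, Finset.sum_pair (T.φ_fpf _).symm, add_assoc]
  simp [(T.φ_fpf d).symm, (T.φ_φ_ne d).symm]

theorem three_mul_card_face : 3 * Fintype.card T.Face = 2 * n := by
  rw [← T.card_darts, mul_comm, ← smul_eq_mul, Fintype.card, ← Finset.sum_const,
    Fintype.card_eq_sum_ones, ← Finset.sum_fiberwise _ T.face]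
  refine Finset.sum_congr rfl fun f _ => ?_
  obtain ⟨d, rfl⟩ := T.face_surjective f
  rw [sum_face_eq]

variable {W : Type*} [AddCommGroup W]

/-- The sum of `x : Fin n → W` over the three sides of each triangle. -/
noncomputable def faceSum : (Fin n → W) →+ (T.Face → W) where
  toFun x f := ∑ d with T.face d = f, x (T.edge d)
  map_zero' := by ext; simp
  map_add' x y := by ext; simp [Finset.sum_add_distrib]

theorem faceSum_apply (x : Fin n → W) (f : T.Face) :
    T.faceSum x f = ∑ d with T.face d = f, x (T.edge d) := rfl

theorem faceSum_single_edge (d : T.D) (w : W) :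
    T.faceSum (Pi.single (T.edge d) w) =
      Pi.single (T.face d) w + Pi.single (T.face (T.α d)) w := by
  ext f
  simp only [faceSum_apply, Pi.single_apply, Pi.add_apply]
  rw [Finset.sum_ite, Finset.sum_const_zero, add_zero, Finset.filter_comm, filter_edge_eq,
    Finset.sum_filter, Finset.sum_pair (T.α_fpf d).symm]
  simp only [eq_comm]

theorem sum_faceSum (x : Fin n → W) : ∑ f, T.faceSum x f = 2 • ∑ j, x j := by
  simp only [faceSum_apply]
  rw [Finset.sum_fiberwise, ← Finset.sum_fiberwise _ T.edge, Finset.smul_sum]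
  refine Finset.sum_congr rfl fun j _ => ?_
  obtain ⟨d, rfl⟩ := T.edge_surj j
  rw [filter_edge_eq, Finset.sum_pair (T.α_fpf d).symm, edge_α, two_nsmul]

theorem single_sub_single_mem_range_faceSum (hW : ∀ w : W, 2 • w = 0) (w : W) (f f' : T.Face) :
    (Pi.single f w - Pi.single f' w : T.Face → W) ∈ T.faceSum.range := by
  obtain ⟨d, rfl⟩ := T.face_surjective f
  obtain ⟨d', rfl⟩ := T.face_surjective f'
  let c (d : T.D) : (T.Face → W) ⧸ (T.faceSum (W := W)).range :=
    (Pi.single (T.face d) w : T.Face → W)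
  have hφ (d : T.D) : c (T.φ d) = c d := by simp only [c, face_φ]
  have hα (d : T.D) : c (T.α d) = c d := by
    refine QuotientAddGroup.eq.2 ⟨Pi.single (T.edge d) w, ?_⟩
    have hw : w = -w := eq_neg_of_add_eq_zero_left ((two_nsmul w).symm.trans (hW w))
    rw [faceSum_single_edge, add_comm, ← Pi.single_neg, ← hw]
  rw [sub_eq_neg_add]
  exact QuotientAddGroup.eq.1 (T.eq_of_α_φ_invariant hα hφ d' d)

theorem mem_range_faceSum_iff (hW : ∀ w : W, 2 • w = 0) (y : T.Face → W) :
    y ∈ T.faceSum.range ↔ ∑ f, y f = 0 := by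
  constructor
  · rintro ⟨x, rfl⟩
    rw [sum_faceSum, hW]
  · intro hy
    obtain hF | ⟨⟨f₀⟩⟩ := isEmpty_or_nonempty T.Face
    · exact ⟨0, Subsingleton.elim _ _⟩
    have hsum : ∑ f, (Pi.single f₀ (y f) : T.Face → W) = Pi.single f₀ (∑ f, y f) :=
      (map_sum (AddMonoidHom.single (fun _ => W) f₀) y _).symm
    have := AddSubgroup.sum_mem _ fun f (_ : f ∈ Finset.univ) =>
      T.single_sub_single_mem_range_faceSum hW (y f) f f₀
    rwa [Finset.sum_sub_distrib, Finset.univ_sum_single, hsum, hy, Pi.single_zero,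
      sub_zero] at this

theorem card_ker_faceSum_mul_pow [Nonempty T.D] (hW : ∀ w : W, 2 • w = 0) :
    Nat.card (T.faceSum (W := W)).ker * Nat.card W ^ Fintype.card T.Face =
      Nat.card W ^ (n + 1) := by
  let total : (T.Face → W) →+ W := ∑ f, Pi.evalAddMonoidHom (fun _ => W) f
  have htotal (y : T.Face → W) : total y = ∑ f, y f := AddMonoidHom.finsetSum_apply ..
  have hsurj : Function.Surjective total := fun w =>
    ⟨Pi.single (T.face (Classical.arbitrary T.D)) w, by simp [htotal]⟩
  have hrange : T.faceSum.range = total.ker := by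
    ext y
    rw [mem_range_faceSum_iff T hW, AddMonoidHom.mem_ker, htotal]
  have hx := T.faceSum.ker.card_mul_index (G := Fin n → W)
  have hy := total.ker.card_mul_index
  rw [AddSubgroup.index_ker, Nat.card_fun, Nat.card_fin] at hx
  rw [AddSubgroup.index_ker, AddMonoidHom.range_eq_top.2 hsurj, AddSubgroup.card_top,
    Nat.card_fun, Nat.card_eq_fintype_card (α := T.Face)] at hy
  rw [← hy, ← hrange, ← mul_assoc, hx, pow_succ]

end Face

section Card

theorem nonempty_D (hp : 1 ≤ p) : Nonempty T.D :=
  let ⟨d, _⟩ := T.vert_surj ⟨0, hp⟩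
  ⟨d⟩

theorem card_edges (T : IdealTriangulation g p n) : (n : ℤ) = 6 * g + 3 * p - 6 := by
  have h₁ := T.euler
  have h₂ := T.three_mul_card_face
  rw [T.card_darts] at h₁
  lia

theorem three_le_three_mul_add (T : IdealTriangulation g p n) [Nonempty T.D] : 3 ≤ 3 * g + p := by
  have hn := T.card_edges
  have := (T.edge (Classical.arbitrary T.D)).pos
  lia

theorem card_ker_faceSum [Nonempty T.D] {W : Type*} [AddCommGroup W] [Finite W]
    (hW : ∀ w : W, 2 • w = 0) :
    Nat.card (T.faceSum (W := W)).ker = Nat.card W ^ (2 * g + p - 1) := by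
  have h := T.card_ker_faceSum_mul_pow hW
  have hn := T.card_edges
  have hF := T.three_mul_card_face
  have hpos := T.three_le_three_mul_add
  have hexp : n + 1 = 2 * g + p - 1 + Fintype.card T.Face := by lia
  rw [hexp, pow_add] at h
  exact Nat.eq_of_mul_eq_mul_right (pow_pos Nat.card_pos _) h

theorem cornerSum_eq_zero_iff_faceSum_eq_zero {W : Type*} [AddCommGroup W]
    (hW : ∀ w : W, 2 • w = 0) (x : Fin n → W) : T.cornerSum x = 0 ↔ T.faceSum x = 0 := by
  simp only [funext_iff, T.face_surjective.forall]
  refine forall_congr' fun d => ?_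
  have hw := eq_neg_of_add_eq_zero_left ((two_nsmul _).symm.trans (hW (x (T.edge (T.φ d)))))
  rw [faceSum_apply, sum_face_eq, cornerSum_apply, sub_eq_add_neg, ← hw, add_comm (x _) (x _),
    add_right_comm]
  rfl

theorem two_nsmul_eq_zero_of_cornerSum_eq_zero {A : Type*} [AddCommGroup A] {x : Fin n → A}
    (hx : T.cornerSum x = 0) (j : Fin n) : 2 • x j = 0 := by
  obtain ⟨d, rfl⟩ := T.edge_surj j
  rw [← cornerSum_add_cornerSum_φ, hx, Pi.zero_apply, Pi.zero_apply, add_zero]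

theorem map_ker_faceSum {A : Type*} [AddCommGroup A] :
    (T.faceSum (W := (nsmulAddMonoidHom 2 : A →+ A).ker)).ker.map
      ((nsmulAddMonoidHom 2 : A →+ A).ker.subtype.compLeft (Fin n)) = T.cornerSum.ker := by
  have hcomp (z : Fin n → (nsmulAddMonoidHom 2 : A →+ A).ker) :
      T.cornerSum (fun j => (z j : A)) = 0 ↔ T.faceSum z = 0 := by
    rw [← cornerSum_eq_zero_iff_faceSum_eq_zero T fun w => Subtype.ext w.2]
    simp only [funext_iff, cornerSum_apply, Subtype.ext_iff, Pi.zero_apply]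
    rfl
  ext x
  constructor
  · rintro ⟨z, hz, rfl⟩
    exact (hcomp z).2 hz
  · intro hx
    let z (j : Fin n) : (nsmulAddMonoidHom 2 : A →+ A).ker :=
      ⟨x j, T.two_nsmul_eq_zero_of_cornerSum_eq_zero hx j⟩
    exact ⟨z, (hcomp z).1 hx, rfl⟩

theorem card_ker_cornerSum [Nonempty T.D] (A : Type*) [AddCommGroup A] [Finite A] :
    Nat.card (T.cornerSum (A := A)).ker =
      Nat.card (nsmulAddMonoidHom 2 : A →+ A).ker ^ (2 * g + p - 1) := by
  have hinj :
      Function.Injective ((nsmulAddMonoidHom 2 : A →+ A).ker.subtype.compLeft (Fin n)) :=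
    (AddSubgroup.subtype_injective _).comp_left
  rw [← map_ker_faceSum, AddSubgroup.card_map_of_injective hinj,
    T.card_ker_faceSum fun w => Subtype.ext w.2]

theorem card_ker_wpMatrix (hp : 1 ≤ p) (R : Type*) [CommRing R] [Finite R] :
    Nat.card (T.wpMatrix.map (Int.cast : ℤ → R)).mulVecLin.ker =
      Nat.card R ^ p * Nat.card (nsmulAddMonoidHom 2 : R →+ R).ker ^ (2 * g) := by
  have := T.nonempty_D hp
  have : Nonempty (Fin p) := ⟨⟨0, hp⟩⟩
  have hconst := card_constModSubgroup_mul_card (ι := Fin p) (nsmulAddMonoidHom 2 : R →+ R).range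
  have hR := (nsmulAddMonoidHom 2 : R →+ R).ker.card_mul_index
  rw [AddSubgroup.index_ker] at hR
  rw [Fintype.card_fin] at hconst
  rw [card_ker_wpMatrix_eq_mul, card_ker_cornerSum]
  set t := Nat.card (nsmulAddMonoidHom 2 : R →+ R).ker
  set r := Nat.card (nsmulAddMonoidHom 2 : R →+ R).range
  set c := Nat.card (constModSubgroup (Fin p) (nsmulAddMonoidHom 2 : R →+ R).range)
  refine Nat.eq_of_mul_eq_mul_right (Nat.card_pos : 0 < Nat.card R) ?_
  calc t ^ (2 * g + p - 1) * c * Nat.card R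
      = t ^ (2 * g + p - 1) * t * (c * r) := by rw [← hR]; ring
    _ = t ^ (2 * g) * (t * r) ^ p * Nat.card R := by
      rw [hconst, ← pow_succ, Nat.sub_add_cancel (by lia), pow_add, mul_pow]; ring
    _ = Nat.card R ^ p * t ^ (2 * g) * Nat.card R := by rw [hR]; ring

end Card

end IdealTriangulation

theorem chekhovFock_irreducible_rep_dim_even_general (g p n N : ℕ) (hp : 1 ≤ p)
    (T : IdealTriangulation g p n) (q : ℂ) (hN0 : 0 < N) (hq : IsPrimitiveRoot (q ^ 2) N)
    (V : Type*) [AddCommGroup V] [Module ℂ V] [FiniteDimensional ℂ V]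
    (ρ : ChekhovFock T q →ₐ[ℂ] Module.End ℂ V) (hρ : IsIrreducibleRep ρ) :
    Module.finrank ℂ V = N ^ (3 * g + p - 3) / N.gcd 2 ^ g := by
  have : NeZero N := ⟨hN0.ne'⟩
  have := T.nonempty_D hp
  let M := (T.wpMatrix.map (Int.cast : ℤ → ZMod N)).mulVecLin
  have hdim : Module.finrank ℂ V ^ 2 = Nat.card M.range :=
    QuantumTorus.finrank_sq_eq_card_range hq hρ
  have hker : Nat.card M.ker = N ^ p * N.gcd 2 ^ (2 * g) := by
    rw [T.card_ker_wpMatrix hp, IsAddCyclic.card_nsmulAddMonoidHom_ker, Nat.card_zmod]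
  have hcount : Nat.card M.ker * Nat.card M.range = N ^ n := by
    have := M.toAddMonoidHom.ker.card_mul_index
    rwa [AddSubgroup.index_ker, Nat.card_fun, Nat.card_zmod, Nat.card_fin] at this
  have hn : n = p + 2 * (3 * g + p - 3) := by
    have := T.card_edges
    have := T.three_le_three_mul_add
    lia
  have hsq : (N.gcd 2 ^ g * Module.finrank ℂ V) ^ 2 = (N ^ (3 * g + p - 3)) ^ 2 := by
    refine Nat.eq_of_mul_eq_mul_left (pow_pos hN0 p) ?_
    rw [← pow_mul' N, ← pow_add, ← hn, ← hcount, hker, ← hdim]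
    ring
  rw [← Nat.pow_left_injective two_ne_zero hsq,
    Nat.mul_div_cancel_left _ (pow_pos (Nat.gcd_pos_of_pos_left 2 hN0) g)]

/-- Let `q²` be a primitive `N`-th root of unity with `N` even.  Every
irreducible finite-dimensional representation of the Chekhov–Fock algebra `𝒯_λ^q` of an ideal
triangulation of a genus `g` surface with `p` punctures has dimension `N^(3g+p-3) / 2^g`. -/
theorem chekhovFock_irreducible_rep_dim_even (g p n N : ℕ) (hp : 1 ≤ p)
    (hgp : g = 0 → 3 ≤ p) (hn : (n : ℤ) = 6 * g + 3 * p - 6)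
    (T : IdealTriangulation g p n) (q : ℂ)
    (hN : Even N) (hN0 : 0 < N) (hq : IsPrimitiveRoot (q ^ 2) N)
    (V : Type*) [AddCommGroup V] [Module ℂ V] [FiniteDimensional ℂ V]
    (ρ : ChekhovFock T q →ₐ[ℂ] Module.End ℂ V) (hρ : IsIrreducibleRep ρ) :
    Module.finrank ℂ V = N ^ (3 * g + p - 3) / 2 ^ g := by
  simpa only [Nat.gcd_eq_right hN.two_dvd] using
    chekhovFock_irreducible_rep_dim_even_general g p n N hp T q hN0 hq V ρ hρ
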